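/- (Corollary 4.6, first identity.) In U(gl(m,ℂ)), for every q ≥ 0 and all 1 ≤ k,l ≤ m, ẽ_{kl}^q = (−1)^q · Σ_{p=0}^q ( Σ_{s=p}^q binom(q,s)·(−m)^{q−s}·K_{s−p}(−c) ) · e_{lk}^p (note the transposed indices l,k on the right-hand side). -/

import Mathlib

open Finset

attribute [local instance 100] LieRing.ofAssociativeRing

/-- `gl(m, ℂ)`: the Lie algebra of `m × m` complex matrices. -/
abbrev glm (m : ℕ) := Matrix (Fin m) (Fin m) ℂ

/-- The universal enveloping algebra `U(gl(m,ℂ))`. -/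
abbrev UEA (m : ℕ) := UniversalEnvelopingAlgebra ℂ (glm m)

/-- The image of the matrix unit `e_{kl}` in `U(gl(m,ℂ))`. -/
noncomputable def E {m : ℕ} (k l : Fin m) : UEA m :=
  UniversalEnvelopingAlgebra.ι ℂ (Matrix.single k l (1 : ℂ))

/-- `e_{kl}^q`, defined by `e_{kl}^0 = δ_{kl}` and `e_{kl}^{q+1} = Σ_i e_{ki} e_{il}^q`. -/
noncomputable def Epow {m : ℕ} : ℕ → Fin m → Fin m → UEA m
  | 0, k, l => if k = l then 1 else 0
  | q + 1, k, l => ∑ i, E k i * Epow q i l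

/-- `ẽ_{kl}^q`, defined by `ẽ_{kl}^0 = δ_{kl}` and `ẽ_{kl}^{q+1} = −Σ_i e_{ik} ẽ_{il}^q`. -/
noncomputable def Etil {m : ℕ} : ℕ → Fin m → Fin m → UEA m
  | 0, k, l => if k = l then 1 else 0
  | q + 1, k, l => -∑ i, E i k * Etil q i l

/-- The Casimir element `c_q = Σ_k e_{kk}^q`. -/
noncomputable def Cas (m : ℕ) (q : ℕ) : UEA m := ∑ k : Fin m, Epow q k k

/-- The Casimir element `c̃_q = Σ_k ẽ_{kk}^q`. -/
noncomputable def CasT (m : ℕ) (q : ℕ) : UEA m := ∑ k : Fin m, Etil q k k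

/-- `K_n(−c) ∈ U(gl(m,ℂ))`: `K_0(−c) = 1` and `K_n(−c) = Σ_{p=0}^{n−1} K_p(−c)·c_{n−1−p}`. -/
noncomputable def Kc (m : ℕ) : ℕ → UEA m
  | 0 => 1
  | n + 1 => ∑ p ∈ (Finset.range (n + 1)).attach, Kc m p.1 * Cas m (n - p.1)
  decreasing_by exact Finset.mem_range.mp p.2

/-! Let `M` be the matrix with entries `e_{kl}` over `U(gl(m,ℂ))`, so that `e_{kl}^q` is the
`(k, l)` entry of `M ^ q` and `ẽ_{kl}^q` that of `(-Mᵀ) ^ q`. Since the entries do not commute,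
`Mᵀ * (M ^ p)ᵀ` is not `(M ^ (p + 1))ᵀ`; the commutation relations give instead
`(Mᵀ + m) * (M ^ p)ᵀ = (M ^ (p + 1))ᵀ + c_p • 1`.
As the `c_p` are central, iterating this yields
`(Mᵀ + m) ^ s = ∑_{p ≤ s} K_{s-p}(-c) • (M ^ p)ᵀ`,
and it remains to expand `Mᵀ = (Mᵀ + m) - m` by the binomial theorem. -/

theorem commute_of_convolution_recursion {A : Type*} [Semiring A] {a : A} {c K : ℕ → A}
    (hc : ∀ i, Commute a (c i)) (hK_zero : K 0 = 1)
    (hK_succ : ∀ i, K (i + 1) = ∑ p ∈ range (i + 1), K p * c (i - p)) (i : ℕ) :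
    Commute a (K i) := by
  induction i using Nat.strong_induction_on with
  | _ i ih =>
    cases i with
    | zero => exact hK_zero ▸ Commute.one_right a
    | succ i =>
      rw [hK_succ]
      exact Commute.sum_right _ _ _ fun p hp => (ih p (mem_range.1 hp)).mul_right (hc _)

theorem matrix_mul_smul_of_commute {l n o A : Type*} [Fintype n] [Semiring A] {a : A}
    {M : Matrix l n A} (hM : ∀ i j, Commute (M i j) a) (X : Matrix n o A) :
    M * a • X = a • (M * X) := by
  ext i j
  simp only [Matrix.mul_apply, Matrix.smul_apply, smul_eq_mul, mul_sum]
  exact sum_congr rfl fun k _ => (hM i k).left_comm _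

theorem pow_eq_sum_choose_smul_add_algebraMap_pow {R B : Type*} [CommRing R] [Ring B]
    [Algebra R B] (b : B) (r : R) (q : ℕ) :
    b ^ q = ∑ s ∈ range (q + 1),
      ((q.choose s : R) * (-r) ^ (q - s)) • (b + algebraMap R B r) ^ s := by
  have hcomm : Commute (b + algebraMap R B r) (algebraMap R B (-r)) :=
    (Algebra.commutes (-r) _).symm
  calc b ^ q = (b + algebraMap R B r + algebraMap R B (-r)) ^ q := by
        rw [map_neg, add_neg_cancel_right]
    _ = _ := by
        rw [hcomm.add_pow]
        refine sum_congr rfl fun s _ => ?_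
        rw [Algebra.smul_def, Algebra.commutes, mul_comm (q.choose s : R), map_mul, map_pow,
          map_natCast, mul_assoc]

section GLMatrix

open scoped Matrix

variable {n A : Type*} [DecidableEq n] [Ring A]

/-- A matrix over a possibly noncommutative ring whose entries satisfy the commutation relations of
the matrix units of `gl(n)`. It abstracts the matrix of generators of `U(gl(n))`. -/
def IsGLMatrix (M : Matrix n n A) : Prop :=
  ∀ a b c d, ⁅M a b, M c d⁆ = (if b = c then M a d else 0) - if d = a then M c b else 0

theorem isGLMatrix_of_lieHom [Fintype n] {R : Type*} [CommRing R] [Algebra R A]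
    (φ : Matrix n n R →ₗ⁅R⁆ A) : IsGLMatrix (Matrix.of fun i j => φ (Matrix.single i j 1)) := by
  intro a b c d
  have map_single_mul_single (i j k l : n) :
      φ (Matrix.single i j 1 * Matrix.single k l 1) =
        if j = k then φ (Matrix.single i l 1) else 0 := by
    split_ifs with h
    · rw [h, Matrix.single_mul_single_same, one_mul]
    · rw [Matrix.single_mul_single_of_ne _ _ _ _ h, map_zero]
  simp only [Matrix.of_apply]
  rw [← LieHom.map_lie, Ring.lie_def, map_sub, map_single_mul_single, map_single_mul_single]

variable [Fintype n]

/-- Since a commutant is closed under products, this form of the entrywise relation carries it from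
a matrix to its powers. -/
theorem commute_scalar_sub_single_iff (x : A) (a b : n) (X : Matrix n n A) :
    Commute (Matrix.scalar n x - Matrix.single b a 1) X ↔
      ∀ c d, ⁅x, X c d⁆ = (if b = c then X a d else 0) - if d = a then X c b else 0 := by
  have single_mul_apply (c d : n) :
      (Matrix.single b a (1 : A) * X) c d = if b = c then X a d else 0 := by
    simp [Matrix.mul_apply, Matrix.single_apply, ite_and]
  have mul_single_apply (c d : n) :
      (X * Matrix.single b a (1 : A)) c d = if d = a then X c b else 0 := by
    simp [Matrix.mul_apply, Matrix.single_apply, ite_and, eq_comm]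
  rw [commute_iff_eq, ← Matrix.ext_iff]
  refine forall₂_congr fun c d => ?_
  simp only [sub_mul, mul_sub, Matrix.sub_apply, single_mul_apply, mul_single_apply,
    Matrix.scalar_apply, Matrix.diagonal_mul, Matrix.mul_diagonal, Ring.lie_def]
  rw [sub_eq_sub_iff_sub_eq_sub]

namespace IsGLMatrix

variable {M : Matrix n n A}

theorem lie_pow_apply (hM : IsGLMatrix M) (p : ℕ) (a b c d : n) :
    ⁅M a b, (M ^ p) c d⁆ = (if b = c then (M ^ p) a d else 0) - if d = a then (M ^ p) c b else 0 :=
  (commute_scalar_sub_single_iff _ a b _).1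
    (((commute_scalar_sub_single_iff _ a b M).2 (hM a b)).pow_right p) c d

theorem commute_trace_pow (hM : IsGLMatrix M) (p : ℕ) (a b : n) :
    Commute (M a b) (M ^ p).trace := by
  rw [commute_iff_lie_eq, Matrix.trace, Ring.lie_def, mul_sum, sum_mul, ← sum_sub_distrib]
  simp only [Matrix.diag_apply, ← Ring.lie_def, hM.lie_pow_apply, sum_sub_distrib, sum_ite_eq,
    sum_ite_eq', mem_univ, if_true, sub_self]

theorem transpose_add_card_mul_pow_transpose (hM : IsGLMatrix M) (p : ℕ) :
    (Mᵀ + (Fintype.card n : Matrix n n A)) * (M ^ p)ᵀ =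
      (M ^ (p + 1))ᵀ + (M ^ p).trace • (1 : Matrix n n A) := by
  ext k l
  have swap (i : n) : M i k * (M ^ p) l i =
      (M ^ p) l i * M i k + ((if k = l then (M ^ p) i i else 0) - (M ^ p) l k) := by
    rw [← sub_eq_iff_eq_add', ← Ring.lie_def, hM.lie_pow_apply, if_pos rfl]
  have card_mul : ((Fintype.card n : Matrix n n A) * (M ^ p)ᵀ) k l =
      Fintype.card n • (M ^ p) l k := by
    rw [← nsmul_eq_mul, Matrix.smul_apply, Matrix.transpose_apply]
  have transpose_mul : (Mᵀ * (M ^ p)ᵀ) k l =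
      (M ^ (p + 1)) l k + ((if k = l then (M ^ p).trace else 0) -
        Fintype.card n • (M ^ p) l k) := by
    simp only [Matrix.mul_apply, Matrix.transpose_apply, swap, sum_add_distrib, sum_sub_distrib,
      pow_succ, Matrix.trace, Matrix.diag_apply, sum_const, card_univ]
    split_ifs <;> simp
  rw [add_mul, Matrix.add_apply, card_mul, transpose_mul, add_assoc, sub_add_cancel]
  simp [Matrix.one_apply]

end IsGLMatrix

theorem IsGLMatrix.transpose_add_card_pow {M : Matrix n n A} (hM : IsGLMatrix M) {K : ℕ → A}
    (hK_zero : K 0 = 1)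
    (hK_succ : ∀ i, K (i + 1) = ∑ p ∈ range (i + 1), K p * (M ^ (i - p)).trace) (s : ℕ) :
    (Mᵀ + (Fintype.card n : Matrix n n A)) ^ s =
      ∑ p ∈ range (s + 1), K (s - p) • (M ^ p)ᵀ := by
  have commute_K (i : ℕ) (k l : n) :
      Commute ((Mᵀ + (Fintype.card n : Matrix n n A)) k l) (K i) := by
    rw [Matrix.add_apply, ← Matrix.diagonal_natCast, Matrix.diagonal_apply]
    refine .add_left (commute_of_convolution_recursion (hM.commute_trace_pow · l k)
      hK_zero hK_succ i) ?_
    split_ifs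
    exacts [Nat.cast_commute _ _, .zero_left _]
  induction s with
  | zero => simp [hK_zero]
  | succ s ih =>
    have sum_trace : ∑ p ∈ range (s + 1), K (s - p) * (M ^ p).trace = K (s + 1) := by
      rw [hK_succ, ← sum_flip]
      exact sum_congr rfl fun p hp => by rw [Nat.sub_sub_self (mem_range_succ_iff.1 hp)]
    calc (Mᵀ + (Fintype.card n : Matrix n n A)) ^ (s + 1)
      _ = ∑ p ∈ range (s + 1),
            (K (s - p) • (M ^ (p + 1))ᵀ + (K (s - p) * (M ^ p).trace) • (1 : Matrix n n A)) := by
        rw [pow_succ', ih, mul_sum]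
        simp only [matrix_mul_smul_of_commute (commute_K _),
          hM.transpose_add_card_mul_pow_transpose, smul_add, smul_smul]
      _ = ∑ p ∈ range (s + 1), K (s - p) • (M ^ (p + 1))ᵀ + K (s + 1) • (1 : Matrix n n A) := by
        rw [sum_add_distrib, ← sum_smul, sum_trace]
      _ = ∑ p ∈ range (s + 1 + 1), K (s + 1 - p) • (M ^ p)ᵀ := by
        simp [sum_range_succ' _ (s + 1)]

theorem statement15_general (R : Type*) [CommRing R] [Algebra R A] {M : Matrix n n A}
    (hM : IsGLMatrix M) {K : ℕ → A} (hK_zero : K 0 = 1)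
    (hK_succ : ∀ i, K (i + 1) = ∑ p ∈ range (i + 1), K p * (M ^ (i - p)).trace) (q : ℕ) :
    (-Mᵀ) ^ q = (-1 : R) ^ q • ∑ p ∈ range (q + 1),
      (∑ s ∈ Icc p q, ((q.choose s : R) * (-(Fintype.card n : R)) ^ (q - s)) • K (s - p)) •
        (M ^ p)ᵀ := by
  let coeff (s : ℕ) : R := (q.choose s : R) * (-(Fintype.card n : R)) ^ (q - s)
  calc (-Mᵀ) ^ q
    _ = (-1 : R) ^ q • Mᵀ ^ q := by rw [← neg_one_smul R Mᵀ, smul_pow]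
    _ = (-1 : R) ^ q • ∑ s ∈ range (q + 1), coeff s •
          (Mᵀ + (Fintype.card n : Matrix n n A)) ^ s := by
      rw [pow_eq_sum_choose_smul_add_algebraMap_pow Mᵀ (Fintype.card n : R), map_natCast]
    _ = (-1 : R) ^ q • ∑ s ∈ range (q + 1), ∑ p ∈ range (s + 1),
          (coeff s • K (s - p)) • (M ^ p)ᵀ := by
      simp only [hM.transpose_add_card_pow hK_zero hK_succ, smul_sum, smul_assoc]
    _ = (-1 : R) ^ q • ∑ p ∈ range (q + 1), (∑ s ∈ Icc p q, coeff s • K (s - p)) •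
          (M ^ p)ᵀ := by
      simp only [sum_smul]
      rw [sum_comm' (t' := range (q + 1)) (s' := fun p => Icc p q)]
      intro s p
      simp only [mem_range, mem_Icc]
      lia

end GLMatrix

/-- The matrix over `U(gl(m,ℂ))` whose `(k, l)` entry is the generator `e_{kl}`. -/
noncomputable def generatorMatrix (m : ℕ) : Matrix (Fin m) (Fin m) (UEA m) :=
  Matrix.of E

theorem isGLMatrix_generatorMatrix (m : ℕ) : IsGLMatrix (generatorMatrix m) :=
  isGLMatrix_of_lieHom (UniversalEnvelopingAlgebra.ι ℂ)

theorem Epow_eq_generatorMatrix_pow {m : ℕ} (q : ℕ) (k l : Fin m) :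
    Epow q k l = (generatorMatrix m ^ q) k l := by
  induction q generalizing k with
  | zero => rw [Epow, pow_zero, Matrix.one_apply]
  | succ q ih =>
    simp only [Epow, ih, pow_succ', Matrix.mul_apply, generatorMatrix, Matrix.of_apply]

theorem Etil_eq_neg_transpose_pow {m : ℕ} (q : ℕ) (k l : Fin m) :
    Etil q k l = ((-(generatorMatrix m).transpose) ^ q) k l := by
  induction q generalizing k with
  | zero => rw [Etil, pow_zero, Matrix.one_apply]
  | succ q ih =>
    simp only [Etil, ih, pow_succ', Matrix.mul_apply, Matrix.neg_apply, Matrix.transpose_apply,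
      neg_mul, sum_neg_distrib, generatorMatrix, Matrix.of_apply]

theorem Cas_eq_trace_generatorMatrix_pow (m q : ℕ) : Cas m q = (generatorMatrix m ^ q).trace :=
  sum_congr rfl fun k _ => Epow_eq_generatorMatrix_pow q k k

theorem Kc_succ_eq_sum_mul_trace (m i : ℕ) :
    Kc m (i + 1) = ∑ p ∈ range (i + 1), Kc m p * (generatorMatrix m ^ (i - p)).trace := by
  simp only [Kc, ← Cas_eq_trace_generatorMatrix_pow]
  exact sum_attach (range (i + 1)) fun p => Kc m p * Cas m (i - p)

/-- Corollary 4.6, first identity: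
`ẽ_{kl}^q = (−1)^q Σ_{p=0}^q ( Σ_{s=p}^q C(q,s) (−m)^{q−s} K_{s−p}(−c) ) e_{lk}^p`. -/
theorem statement15 (m : ℕ) (hm : 1 ≤ m) (q : ℕ) (k l : Fin m) :
    Etil q k l = (-1 : ℂ) ^ q •
      ∑ p ∈ Finset.range (q + 1),
        (∑ s ∈ Finset.Icc p q, ((q.choose s : ℂ) * (-(m : ℂ)) ^ (q - s)) • Kc m (s - p))
          * Epow p l k := by
  simpa [Etil_eq_neg_transpose_pow, Epow_eq_generatorMatrix_pow, Matrix.sum_apply] using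
    congr_fun₂ (statement15_general ℂ (isGLMatrix_generatorMatrix m) (by rw [Kc])
      (Kc_succ_eq_sum_mul_trace m) q) k l
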